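/- Let X be a finite topological space. Then X is pre-Hausdorff if and only if its family of open sets forms a Borel field (σ-algebra) on X; equivalently, if and only if the complement of every open set is open. -/

import Mathlib

/-- `x` and `y` admit a T₀ separation: some open set contains one of them but not the other. -/
def T0Sep {X : Type*} [TopologicalSpace X] (x y : X) : Prop :=
  ∃ U : Set X, IsOpen U ∧ ((x ∈ U ∧ y ∉ U) ∨ (y ∈ U ∧ x ∉ U))

/-- `x` and `y` admit a T₂ separation: disjoint open sets around them. -/
def T2Sep {X : Type*} [TopologicalSpace X] (x y : X) : Prop :=
  ∃ U V : Set X, IsOpen U ∧ IsOpen V ∧ x ∈ U ∧ y ∈ V ∧ U ∩ V = ∅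

/-- A space is pre-Hausdorff (T₀,₂) if every T₀-separated pair is T₂-separated. -/
def PreHausdorff (X : Type*) [TopologicalSpace X] : Prop :=
  ∀ x y : X, T0Sep x y → T2Sep x y

/-- A Borel field (σ-algebra) on a set: a nonempty family of subsets closed under
complements and countable unions. -/
def IsBorelField {X : Type*} (F : Set (Set X)) : Prop :=
  F.Nonempty ∧ (∀ A ∈ F, Aᶜ ∈ F) ∧
    ∀ A : ℕ → Set X, (∀ n, A n ∈ F) → (⋃ n, A n) ∈ F

/-!
In an Alexandrov-discrete space, in particular in a finite one, the open sets are exactly the sets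
stable under generalization. A pre-Hausdorff topology has a symmetric specialization relation, and
stability under a symmetric relation passes to complements. Conversely, if complements of open
sets are open, then an open set that tells two points apart separates them together with its
complement.
-/

section

open scoped Topology

variable {X : Type*} [TopologicalSpace X]

theorem t0Sep_iff_not_inseparable {x y : X} : T0Sep x y ↔ ¬ Inseparable x y :=
  not_inseparable_iff_exists_open.symm

theorem t2Sep_iff_disjoint_nhds {x y : X} : T2Sep x y ↔ Disjoint (𝓝 x) (𝓝 y) := by
  simp only [← nhdsSet_singleton, ← separatedNhds_iff_disjoint, T2Sep, SeparatedNhds,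
    Set.singleton_subset_iff, Set.disjoint_iff_inter_eq_empty]

theorem preHausdorff_iff_r1Space : PreHausdorff X ↔ R1Space X := by
  simp only [PreHausdorff, t0Sep_iff_not_inseparable, t2Sep_iff_disjoint_nhds,
    r1Space_iff_inseparable_or_disjoint_nhds, or_iff_not_imp_left]

theorem isOpen_compl_of_isOpen [AlexandrovDiscrete X] [R0Space X] {U : Set X} (hU : IsOpen U) :
    IsOpen Uᶜ :=
  isOpen_iff_forall_specializes.2 fun _ _ hxy hy hx ↦ hy (hxy.symm.mem_open hU hx)

theorem r1Space_of_forall_isOpen_compl (h : ∀ U : Set X, IsOpen U → IsOpen Uᶜ) : R1Space X where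
  specializes_or_disjoint_nhds x y := by
    refine or_iff_not_imp_left.2 fun hxy ↦ ?_
    obtain ⟨U, hU, hyU, hxU⟩ := not_specializes_iff_exists_open.1 hxy
    exact Filter.disjoint_of_disjoint_of_mem disjoint_compl_left
      ((h U hU).mem_nhds hxU) (hU.mem_nhds hyU)

theorem r1Space_iff_forall_isOpen_compl [AlexandrovDiscrete X] :
    R1Space X ↔ ∀ U : Set X, IsOpen U → IsOpen Uᶜ :=
  ⟨fun _ _ ↦ isOpen_compl_of_isOpen, r1Space_of_forall_isOpen_compl⟩

theorem isBorelField_setOf_isOpen_iff :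
    IsBorelField {U : Set X | IsOpen U} ↔ ∀ U : Set X, IsOpen U → IsOpen Uᶜ :=
  ⟨fun h ↦ h.2.1, fun h ↦ ⟨⟨Set.univ, isOpen_univ⟩, h, fun _ hA ↦ isOpen_iUnion hA⟩⟩

end

theorem finite_preHausdorff_iff_borelField_general (X : Type*) [TopologicalSpace X]
    [AlexandrovDiscrete X] :
    (PreHausdorff X ↔ IsBorelField {U : Set X | IsOpen U}) ∧
    (PreHausdorff X ↔ ∀ U : Set X, IsOpen U → IsOpen Uᶜ) := by
  have preHausdorff_iff_compl : PreHausdorff X ↔ ∀ U : Set X, IsOpen U → IsOpen Uᶜ :=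
    preHausdorff_iff_r1Space.trans r1Space_iff_forall_isOpen_compl
  exact ⟨preHausdorff_iff_compl.trans isBorelField_setOf_isOpen_iff.symm, preHausdorff_iff_compl⟩

/-- A finite space is pre-Hausdorff iff its opens form a Borel field; equivalently,
iff the complement of every open set is open. -/
theorem finite_preHausdorff_iff_borelField (X : Type*) [TopologicalSpace X] [Finite X] :
    (PreHausdorff X ↔ IsBorelField {U : Set X | IsOpen U}) ∧
    (PreHausdorff X ↔ ∀ U : Set X, IsOpen U → IsOpen Uᶜ) :=
  finite_preHausdorff_iff_borelField_general X
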